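/- For all integers n ≥ 1 such that n is not the square of an odd integer, the number of (4,3)-regular overpartitions satisfies R̄_{4,3}(2n) ≡ 0 (mod 8). -/

import Mathlib

/-- Number of partitions of `a` with no part divisible by `ℓ` or `μ`
(the non-overlined parts of an `(ℓ,μ)`-regular overpartition). -/
def regularCount (ℓ μ a : ℕ) : ℕ :=
  Fintype.card {p : a.Partition // ∀ i ∈ p.parts, ¬ ℓ ∣ i ∧ ¬ μ ∣ i}

/-- Number of partitions of `a` into distinct parts with no part divisible by `ℓ` or `μ`
(the overlined parts of an `(ℓ,μ)`-regular overpartition). -/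
def regularDistinctCount (ℓ μ a : ℕ) : ℕ :=
  Fintype.card {p : a.Partition // p.parts.Nodup ∧ ∀ i ∈ p.parts, ¬ ℓ ∣ i ∧ ¬ μ ∣ i}

/-- `Rbar ℓ μ n` is the number of `(ℓ,μ)`-regular overpartitions of `n`: pairs `(λ, δ)`
where `λ` is a partition, `δ` is a partition into distinct parts, `|λ| + |δ| = n`,
and no part of `λ` or `δ` is divisible by `ℓ` or by `μ`. -/
def Rbar (ℓ μ n : ℕ) : ℕ :=
  ∑ ab ∈ Finset.HasAntidiagonal.antidiagonal n, regularCount ℓ μ ab.1 * regularDistinctCount ℓ μ ab.2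

namespace RB
open PowerSeries Finset

def A (i : ℕ) : Prop := ¬ 4 ∣ i ∧ ¬ 3 ∣ i
instance : DecidablePred A := fun i => by unfold A; infer_instance

def d (a : ℕ) : ℕ := (a.divisors.filter A).card
def W (m : ℕ) : ℕ := ∑ i ∈ m.divisors.filter A, m / i

noncomputable def g (k : ℕ) : ℤ⟦X⟧ := PowerSeries.mk fun m => if 0 < m ∧ k ∣ m then 1 else 0
noncomputable def hh (k : ℕ) : ℤ⟦X⟧ := PowerSeries.mk fun m => if k ∣ m then ((m / k : ℕ) : ℤ) else 0

lemma one_add_g_mul (k : ℕ) (hk : 0 < k) : (1 + g k) * (1 - X ^ k) = 1 := by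
  ext m
  rw [mul_sub, mul_one, map_sub, coeff_mul_X_pow']
  simp only [g, map_add, coeff_one, coeff_mk]
  by_cases hm : k ≤ m
  · have h1 : k ∣ m - k ↔ k ∣ m := by
      constructor
      · intro h; have := Nat.dvd_add h (dvd_refl k); rwa [Nat.sub_add_cancel hm] at this
      · intro h; exact Nat.dvd_sub h (dvd_refl k)
    rw [if_pos hm]; simp only [h1]
    have : m ≠ 0 := by omega
    by_cases h2 : k ∣ m <;> by_cases h3 : m - k = 0
    · simp [h2, h3, this]; omega
    · simp [h2, h3, this]; omega
    · exfalso; apply h2; have : m = k := by omega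
      rw [this]
    · simp [h2, h3, this]
  · have : ¬ (0 < m ∧ k ∣ m) := fun h => hm (Nat.le_of_dvd h.1 h.2)
    simp [hm, this]

lemma hh_mul (k : ℕ) (hk : 0 < k) : hh k * (1 - X ^ k) = g k := by
  ext m
  rw [mul_sub, mul_one, map_sub, coeff_mul_X_pow']
  simp only [g, hh, coeff_mk]
  by_cases hm : k ≤ m
  · obtain ⟨j, rfl⟩ := Nat.exists_eq_add_of_le hm
    rw [if_pos hm, Nat.add_sub_cancel_left]
    have h1 : k ∣ k + j ↔ k ∣ j := by simp
    simp only [h1]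
    by_cases h2 : k ∣ j
    · have : 0 < k + j := by omega
      rw [Nat.add_div_left _ hk]
      simp [h2, this]
    · simp [h2]
  · by_cases h0 : m = 0
    · subst h0; simp [hm]
    · have : ¬ (k ∣ m) := fun h => hm (Nat.le_of_dvd (by omega) h)
      simp [hm, this]

lemma g_sq (k : ℕ) (hk : 0 < k) : g k + g k ^ 2 = hh k := by
  have h1 := one_add_g_mul k hk
  have h2 := hh_mul k hk
  calc g k + g k ^ 2 = g k * (1 + g k) := by ring
    _ = hh k * ((1 + g k) * (1 - X ^ k)) := by rw [← h2]; ring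
    _ = hh k := by rw [h1, mul_one]

lemma one_add_two_g (k : ℕ) (hk : 0 < k) : (1 + g k) * (1 + X ^ k) = 1 + 2 * g k := by
  have h1 := one_add_g_mul k hk
  linear_combination -h1

lemma prod_expand {ι R : Type*} [CommRing R] (s : Finset ι) (f : ι → R) :
    ∃ E H : R, (∑ i ∈ s, f i) ^ 2 = ∑ i ∈ s, f i ^ 2 + 2 * E ∧
      ∏ i ∈ s, (1 + 2 * f i) = 1 + 4 * ∑ i ∈ s, f i + 2 * (∑ i ∈ s, f i) ^ 2
        - 2 * ∑ i ∈ s, (f i + f i ^ 2) + 8 * H := by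
  classical
  induction s using Finset.induction_on with
  | empty => exact ⟨0, 0, by simp, by simp⟩
  | insert a s ha ih =>
    obtain ⟨E, H, h1, h2⟩ := ih
    refine ⟨E + f a * ∑ i ∈ s, f i, H + 2 * H * f a + f a * E, ?_, ?_⟩
    · rw [sum_insert ha, sum_insert ha]; linear_combination h1
    · rw [prod_insert ha, sum_insert ha, sum_insert ha, h2]
      simp only [sum_add_distrib]
      linear_combination (4 * f a) * h1

lemma regularCount_eq (a : ℕ) : regularCount 4 3 a = #(Nat.Partition.restricted a A) := by
  unfold regularCount Nat.Partition.restricted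
  rw [Fintype.card_subtype]
  rfl

noncomputable def dg (i c : ℕ) : ℤ := if A i ∧ c ≤ 1 then 1 else 0

lemma regularDistinctCount_eq (a : ℕ) :
    (regularDistinctCount 4 3 a : ℤ) = (Nat.Partition.genFun dg).coeff a := by
  unfold regularDistinctCount
  rw [Fintype.card_subtype]
  rw [Nat.Partition.coeff_genFun, card_filter]
  push_cast
  refine sum_congr rfl fun p _ => ?_
  simp only [dg, Finsupp.prod, prod_boole]
  congr 1
  simp only [Multiset.toFinsupp_support, Multiset.mem_toFinset, Multiset.toFinsupp_apply, eq_iff_iff,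
    Multiset.nodup_iff_count_le_one]
  constructor
  · rintro ⟨h1, h2⟩ i hi
    exact ⟨h2 i hi, h1 i⟩
  · intro h
    refine ⟨fun i => ?_, fun i hi => (h i hi).1⟩
    by_cases hi : i ∈ p.parts
    · exact (h i hi).2
    · rw [Multiset.count_eq_zero_of_notMem hi]; omega

lemma Rbar_eq (m : ℕ) : (Rbar 4 3 m : ℤ) =
    ((PowerSeries.mk fun n ↦ (#(Nat.Partition.restricted n A) : ℤ)) * Nat.Partition.genFun dg).coeff m := by
  rw [coeff_mul, Rbar]
  push_cast
  refine sum_congr rfl fun p _ => ?_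
  rw [regularDistinctCount_eq, regularCount_eq, coeff_mk]

noncomputable def gg (i : ℕ) : ℤ⟦X⟧ := if A (i + 1) then g (i + 1) else 0

open PowerSeries.WithPiTopology in
lemma exists_finset (m : ℕ) : ∃ s : Finset ℕ, range m ⊆ s ∧
    (Rbar 4 3 m : ℤ) = (∏ i ∈ s, (1 + 2 * gg i)).coeff m := by
  let _ : TopologicalSpace ℤ := ⊥
  have _ : DiscreteTopology ℤ := ⟨rfl⟩
  have h1 := (Nat.Partition.hasProd_powerSeriesMk_card_restricted ℤ A).mul
    (Nat.Partition.hasProd_genFun dg)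
  have h3 : (fun i => (if A (i + 1) then ∑' j : ℕ, (X : ℤ⟦X⟧) ^ ((i + 1) * j) else 1) *
      (1 + ∑' j, dg (i + 1) (j + 1) • X ^ ((i + 1) * (j + 1)))) = fun i => 1 + 2 * gg i := by
    funext i
    have h4 : ∑' j, dg (i + 1) (j + 1) • (X : ℤ⟦X⟧) ^ ((i + 1) * (j + 1)) =
        if A (i + 1) then X ^ (i + 1) else 0 := by
      rw [tsum_eq_single 0]
      · simp [dg]
      · intro j hj
        have : ¬ (j + 1 ≤ 1) := by omega
        simp [dg, hj]
    rw [h4]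
    unfold gg
    split_ifs with hA
    · have h5 : (∑' j : ℕ, (X : ℤ⟦X⟧) ^ ((i + 1) * j)) * (1 - X ^ (i + 1)) = 1 := by
        simp_rw [pow_mul]
        exact tsum_pow_mul_one_sub_of_constantCoeff_eq_zero (by simp)
      have h6 := one_add_g_mul (i + 1) (by omega)
      have h7 : (∑' j : ℕ, (X : ℤ⟦X⟧) ^ ((i + 1) * j)) = 1 + g (i + 1) := by
        linear_combination (1 + g (i + 1)) * h5 - (∑' j : ℕ, (X : ℤ⟦X⟧) ^ ((i + 1) * j)) * h6
      rw [h7, one_add_two_g _ (by omega)]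
    · simp
  replace h1 : HasProd (fun i => 1 + 2 * gg i) ((PowerSeries.mk fun n =>
      (#(Nat.Partition.restricted n A) : ℤ)) * Nat.Partition.genFun dg) := by
    rw [← h3]
    convert! h1 using 1
  rw [HasProd, PowerSeries.WithPiTopology.tendsto_iff_coeff_tendsto] at h1
  have h8 := h1 m
  rw [nhds_discrete, Filter.tendsto_pure] at h8
  obtain ⟨s, hs1, hs2⟩ := (h8.and (Filter.eventually_ge_atTop (range m))).exists
  exact ⟨s, hs2, by rw [Rbar_eq, ← hs1]⟩

lemma sum_shift {m a : ℕ} (ham : a ≤ m) (ha : 0 < a) (s : Finset ℕ) (hs : range m ⊆ s) (f : ℕ → ℤ) :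
    ∑ i ∈ s, (if A (i + 1) ∧ (i + 1) ∣ a then f (i + 1) else 0) = ∑ i ∈ a.divisors.filter A, f i := by
  rw [← sum_filter]
  refine sum_bij (fun i _ => i + 1) ?_ ?_ ?_ ?_
  · intro i hi
    simp only [mem_filter, Nat.mem_divisors] at hi ⊢
    exact ⟨⟨hi.2.2, by omega⟩, hi.2.1⟩
  · intro i _ j _ h; omega
  · intro b hb
    simp only [mem_filter, Nat.mem_divisors] at hb
    have h1 := Nat.le_of_dvd ha hb.1.1
    have h2 := Nat.pos_of_dvd_of_pos hb.1.1 ha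
    refine ⟨b - 1, ?_, by omega⟩
    simp only [mem_filter]
    rw [Nat.sub_add_cancel h2]
    exact ⟨hs (by simp; omega), hb.2, hb.1.1⟩
  · intros; rfl

lemma coeff_sum_gg {m a : ℕ} (ham : a ≤ m) (s : Finset ℕ) (hs : range m ⊆ s) :
    (∑ i ∈ s, gg i).coeff a = (d a : ℤ) := by
  rw [map_sum]
  rcases Nat.eq_zero_or_pos a with rfl | ha
  · have : d 0 = 0 := by simp [d]
    rw [this]
    refine sum_eq_zero fun i _ => ?_
    unfold gg g; split_ifs <;> simp
  · have := sum_shift ham ha s hs (fun _ => 1)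
    rw [d, card_eq_sum_ones]; push_cast
    rw [← this]
    refine sum_congr rfl fun i _ => ?_
    unfold gg g
    by_cases h : A (i + 1) <;> simp [h, ha]

lemma coeff_sum_hh {m : ℕ} (hm : 0 < m) (s : Finset ℕ) (hs : range m ⊆ s) :
    (∑ i ∈ s, (gg i + gg i ^ 2)).coeff m = (W m : ℤ) := by
  rw [map_sum]
  have := sum_shift le_rfl hm s hs (fun i => ((m / i : ℕ) : ℤ))
  rw [W]; push_cast at this ⊢
  rw [← this]
  refine sum_congr rfl fun i _ => ?_
  unfold gg
  by_cases h : A (i + 1)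
  · rw [if_pos h, g_sq _ (by omega), hh, coeff_mk]; simp [h]
  · simp [h]

lemma Rbar_expand (m : ℕ) (hm : 0 < m) : ∃ H : ℤ, (Rbar 4 3 m : ℤ) =
    4 * d m + 2 * ∑ p ∈ antidiagonal m, (d p.1 : ℤ) * d p.2 - 2 * W m + 8 * H := by
  obtain ⟨s, hs, h1⟩ := exists_finset m
  obtain ⟨E, H, -, h2⟩ := prod_expand s gg
  refine ⟨H.coeff m, ?_⟩
  have h3 : (∑ p ∈ antidiagonal m, (d p.1 : ℤ) * d p.2) = ((∑ i ∈ s, gg i) ^ 2).coeff m := by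
    rw [pow_two, coeff_mul]
    refine sum_congr rfl fun p hp => ?_
    have := mem_antidiagonal.1 hp
    rw [coeff_sum_gg (m := m) (by omega) s hs, coeff_sum_gg (m := m) (by omega) s hs]
  have c (n : ℤ) (f : ℤ⟦X⟧) : ((C n) * f).coeff m = n * f.coeff m := coeff_C_mul m f n
  have c2 : (2 : ℤ⟦X⟧) = C 2 := rfl
  have c4 : (4 : ℤ⟦X⟧) = C 4 := rfl
  have c8 : (8 : ℤ⟦X⟧) = C 8 := rfl
  rw [h1, h2, h3, ← coeff_sum_gg le_rfl s hs, ← coeff_sum_hh hm s hs, c2, c4, c8]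
  simp only [map_add, map_sub, c, coeff_one]
  simp [hm.ne']
end RB

namespace RB
open Finset

lemma card_parity {α : Type*} [DecidableEq α] (s : Finset α) (g : α → α)
    (hg : ∀ x ∈ s, g x ∈ s) (hi : ∀ x ∈ s, g (g x) = x) :
    s.card % 2 = (s.filter (fun x => g x = x)).card % 2 := by
  have h1 := card_filter_add_card_filter_not (s := s) (fun x => g x = x)
  have h2 : ((s.filter (fun x => ¬ g x = x)).card : ZMod 2) = 0 := by
    rw [card_eq_sum_ones]; push_cast
    refine sum_involution (fun a _ => g a) ?_ ?_ ?_ ?_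
    · intros; decide
    · intro a ha _; exact (mem_filter.1 ha).2
    · intro a ha
      rw [mem_filter] at ha ⊢
      refine ⟨hg a ha.1, ?_⟩
      rw [hi a ha.1]; exact fun h => ha.2 h.symm
    · intro a ha; exact hi a (mem_filter.1 ha).1
  rw [ZMod.natCast_eq_zero_iff] at h2
  omega

def Q (α β N : ℕ) : ℕ :=
  ((range (N + 1) ×ˢ range (N + 1)).filter
    (fun p => Odd p.1 ∧ Odd p.2 ∧ α * p.1 ^ 2 + β * p.2 ^ 2 = N)).card

def isS (a : ℕ) : Prop := ∃ u, Odd u ∧ (a = u ^ 2 ∨ a = 3 * u ^ 2)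

def inv1 (p : ℕ × ℕ) : ℕ × ℕ :=
  if p.1 % 4 = p.2 % 4 then (((3 * p.2 - p.1) + (p.1 - 3 * p.2)) / 2, (p.1 + p.2) / 2)
  else ((3 * p.2 + p.1) / 2, ((p.1 - p.2) + (p.2 - p.1)) / 2)

lemma inv1_inv (u v : ℕ) (hu : u % 2 = 1) (hv : v % 2 = 1) : inv1 (inv1 (u, v)) = (u, v) := by
  unfold inv1
  by_cases h : u % 4 = v % 4
  · simp only [h, if_true]
    split_ifs with h2
    · simp only [Prod.mk.injEq]; omega
    · simp only [Prod.mk.injEq]; omega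
  · simp only [h, if_false]
    split_ifs with h2
    · simp only [Prod.mk.injEq]; omega
    · simp only [Prod.mk.injEq]; omega

lemma inv1_odd (u v : ℕ) (hu : u % 2 = 1) (hv : v % 2 = 1) :
    (inv1 (u, v)).1 % 2 = 1 ∧ (inv1 (u, v)).2 % 2 = 1 := by
  unfold inv1
  by_cases h : u % 4 = v % 4
  · simp only [h, if_true]; omega
  · simp only [h, if_false]; omega

lemma inv1_eq (u v : ℕ) (hu : u % 2 = 1) (hv : v % 2 = 1) :
    (inv1 (u, v)).1 ^ 2 + 3 * (inv1 (u, v)).2 ^ 2 = u ^ 2 + 3 * v ^ 2 := by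
  have key : ∀ z w : ℕ, (2 * (z : ℤ) = 3 * v - u ∨ 2 * (z : ℤ) = u - 3 * v) → 2 * (w : ℤ) = u + v →
      z ^ 2 + 3 * w ^ 2 = u ^ 2 + 3 * v ^ 2 := by
    intro z w hz hw
    zify
    have : (2 * (z : ℤ)) ^ 2 = (3 * v - u) ^ 2 := by
      rcases hz with hz | hz <;> rw [hz]; ring
    have h2 : (2 * (w : ℤ)) ^ 2 = (u + v) ^ 2 := by rw [hw]
    linarith
  have key2 : ∀ z w : ℕ, 2 * (z : ℤ) = 3 * v + u → (2 * (w : ℤ) = u - v ∨ 2 * (w : ℤ) = v - u) →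
      z ^ 2 + 3 * w ^ 2 = u ^ 2 + 3 * v ^ 2 := by
    intro z w hz hw
    zify
    have : (2 * (w : ℤ)) ^ 2 = (u - v) ^ 2 := by
      rcases hw with hw | hw <;> rw [hw]; ring
    have h2 : (2 * (z : ℤ)) ^ 2 = (3 * v + u) ^ 2 := by rw [hz]
    linarith
  unfold inv1
  by_cases h : u % 4 = v % 4
  · simp only [h, if_true]; apply key <;> omega
  · simp only [h, if_false]; apply key2 <;> omega

lemma inv1_fix (u v : ℕ) (hu : u % 2 = 1) (hv : v % 2 = 1) :
    inv1 (u, v) = (u, v) ↔ u = v ∨ u = 3 * v := by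
  unfold inv1
  by_cases h : u % 4 = v % 4
  · simp only [h, if_true, Prod.mk.injEq]; omega
  · simp only [h, if_false, Prod.mk.injEq]; omega

lemma Q_mem {α β N : ℕ} (ha : 0 < α) (hb : 0 < β) (x y : ℕ) :
    (x, y) ∈ ((range (N + 1) ×ˢ range (N + 1)).filter
    (fun p => Odd p.1 ∧ Odd p.2 ∧ α * p.1 ^ 2 + β * p.2 ^ 2 = N)) ↔
    x % 2 = 1 ∧ y % 2 = 1 ∧ α * x ^ 2 + β * y ^ 2 = N := by
  simp only [mem_filter, mem_product, mem_range, Nat.odd_iff]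
  constructor
  · exact fun h => h.2
  · intro h
    refine ⟨?_, h⟩
    have h1 : x ≤ x ^ 2 := Nat.le_self_pow (by norm_num) x
    have h2 : y ≤ y ^ 2 := Nat.le_self_pow (by norm_num) y
    have h3 : x ^ 2 ≤ α * x ^ 2 := Nat.le_mul_of_pos_left _ ha
    have h4 : y ^ 2 ≤ β * y ^ 2 := Nat.le_mul_of_pos_left _ hb
    omega

lemma odd_sq_mod (x : ℕ) (h : x % 2 = 1) : x ^ 2 % 8 = 1 := by
  have : x % 8 = 1 ∨ x % 8 = 3 ∨ x % 8 = 5 ∨ x % 8 = 7 := by omega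
  rcases this with h | h | h | h <;> simp [Nat.pow_mod, h]

open Classical in
lemma Q13 (k : ℕ) : Q 1 3 (4 * k) % 2 = if isS k then 1 else 0 := by
  unfold Q
  rw [card_parity _ inv1]
  · have hmem : ∀ p, p ∈ filter (fun x => inv1 x = x) ((range (4 * k + 1) ×ˢ range (4 * k + 1)).filter
        (fun p => Odd p.1 ∧ Odd p.2 ∧ 1 * p.1 ^ 2 + 3 * p.2 ^ 2 = 4 * k)) ↔
        p.2 % 2 = 1 ∧ ((p.1 = p.2 ∧ k = p.2 ^ 2) ∨ (p.1 = 3 * p.2 ∧ k = 3 * p.2 ^ 2)) := by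
      rintro ⟨u, v⟩
      rw [mem_filter, Q_mem (by norm_num) (by norm_num)]
      constructor
      · rintro ⟨⟨hu, hv, h⟩, hf⟩
        rw [inv1_fix u v hu hv] at hf
        refine ⟨hv, ?_⟩
        rcases hf with rfl | rfl
        · left; simp; omega
        · right; simp; ring_nf at h; omega
      · rintro ⟨hv, ⟨h1, h2⟩ | ⟨h1, h2⟩⟩
        · simp only at h1 h2 hv; subst h1
          refine ⟨⟨hv, hv, by omega⟩, (inv1_fix _ _ hv hv).2 (Or.inl rfl)⟩
        · simp only at h1 h2 hv; subst h1
          refine ⟨⟨by omega, hv, by rw [h2]; ring⟩, (inv1_fix _ _ (by omega) hv).2 (Or.inr rfl)⟩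
    split_ifs with hS
    · obtain ⟨u, hu, h | h⟩ := hS
      · rw [Nat.odd_iff] at hu
        have : filter (fun x => inv1 x = x) ((range (4 * k + 1) ×ˢ range (4 * k + 1)).filter
          (fun p => Odd p.1 ∧ Odd p.2 ∧ 1 * p.1 ^ 2 + 3 * p.2 ^ 2 = 4 * k)) = {(u, u)} := by
          ext ⟨a, b⟩
          rw [hmem, mem_singleton, Prod.mk.injEq]
          constructor
          · rintro ⟨hb, ⟨h1, h2⟩ | ⟨h1, h2⟩⟩
            · have : b = u := Nat.pow_left_injective (n := 2) (by norm_num) (by simp only at *; omega)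
              simp only at h1; omega
            · have := odd_sq_mod u hu; have := odd_sq_mod _ hb; omega
          · rintro ⟨rfl, rfl⟩; simp [hu, h]
        rw [this]; simp
      · rw [Nat.odd_iff] at hu
        have : filter (fun x => inv1 x = x) ((range (4 * k + 1) ×ˢ range (4 * k + 1)).filter
          (fun p => Odd p.1 ∧ Odd p.2 ∧ 1 * p.1 ^ 2 + 3 * p.2 ^ 2 = 4 * k)) = {(3 * u, u)} := by
          ext ⟨a, b⟩
          rw [hmem, mem_singleton, Prod.mk.injEq]
          constructor
          · rintro ⟨hb, ⟨h1, h2⟩ | ⟨h1, h2⟩⟩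
            · have := odd_sq_mod u hu; have := odd_sq_mod _ hb; omega
            · have : b = u := Nat.pow_left_injective (n := 2) (by norm_num) (by simp only at *; omega)
              simp only at h1; omega
          · rintro ⟨rfl, rfl⟩; simp [hu, h]
        rw [this]; simp
    · rw [card_eq_zero.2, Nat.zero_mod]
      rw [eq_empty_iff_forall_notMem]
      intro p hp
      rw [hmem] at hp
      apply hS
      refine ⟨p.2, Nat.odd_iff.2 hp.1, ?_⟩
      rcases hp.2 with h | h
      · exact Or.inl h.2
      · exact Or.inr h.2
  · rintro ⟨u, v⟩ hp
    rw [Q_mem (by norm_num) (by norm_num)] at hp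
    have h1 := inv1_odd u v hp.1 hp.2.1
    have h2 := inv1_eq u v hp.1 hp.2.1
    rw [← Prod.mk.eta (p := inv1 (u, v)), Q_mem (by norm_num) (by norm_num)]
    refine ⟨h1.1, h1.2, ?_⟩
    rw [one_mul, h2]; omega
  · rintro ⟨u, v⟩ hp
    rw [Q_mem (by norm_num) (by norm_num)] at hp
    exact inv1_inv u v hp.1 hp.2.1
end RB

namespace RB
open Finset

def TT (k : ℕ) : Finset (ℕ × ℕ × ℕ) :=
  (range (k + 1) ×ˢ range (k + 1) ×ˢ range (k + 1)).filter
    (fun p => 0 < p.2.1 ∧ 0 < p.2.2 ∧ p.1 ^ 2 + 4 * (p.2.1 * p.2.2) = k)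

lemma TT_mem (k x y z : ℕ) : (x, y, z) ∈ TT k ↔ 0 < y ∧ 0 < z ∧ x ^ 2 + 4 * (y * z) = k := by
  simp only [TT, mem_filter, mem_product, mem_range]
  constructor
  · exact fun h => h.2
  · rintro ⟨h1, h2, h3⟩
    refine ⟨?_, h1, h2, h3⟩
    have h4 : x ≤ x ^ 2 := Nat.le_self_pow (by norm_num) x
    have h5 : y ≤ y * z := Nat.le_mul_of_pos_right _ h2
    have h6 : z ≤ y * z := Nat.le_mul_of_pos_left _ h1
    omega

def NN (k : ℕ) : Finset (ℕ × ℕ) :=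
  (range (k + 1) ×ˢ range (k + 1)).filter (fun p => 0 < p.2 ∧ p.1 ^ 2 + 4 * p.2 ^ 2 = k)

lemma NN_mem (k x y : ℕ) : (x, y) ∈ NN k ↔ 0 < y ∧ x ^ 2 + 4 * y ^ 2 = k := by
  simp only [NN, mem_filter, mem_product, mem_range]
  constructor
  · exact fun h => h.2
  · rintro ⟨h1, h3⟩
    refine ⟨?_, h1, h3⟩
    have h4 : x ≤ x ^ 2 := Nat.le_self_pow (by norm_num) x
    have h5 : y ≤ y ^ 2 := Nat.le_self_pow (by norm_num) y
    omega

lemma TT_NN (k : ℕ) : (TT k).card % 2 = (NN k).card % 2 := by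
  rw [card_parity (TT k) (fun p => (p.1, p.2.2, p.2.1))]
  · congr 1
    symm
    refine card_bij (fun p _ => (p.1, p.2, p.2)) ?_ ?_ ?_
    · rintro ⟨x, y⟩ h
      rw [NN_mem] at h
      simp only [mem_filter, TT_mem]
      refine ⟨⟨h.1, h.1, ?_⟩, trivial⟩
      rw [← h.2]; ring
    · rintro ⟨x, y⟩ _ ⟨x', y'⟩ _ h
      simpa using h
    · rintro ⟨x, y, z⟩ h
      simp only [mem_filter, TT_mem, Prod.mk.injEq] at h
      obtain ⟨⟨h1, h2, h3⟩, -, h4, h5⟩ := h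
      subst h4
      exact ⟨(x, z), (NN_mem _ _ _).2 ⟨h1, by rw [← h3]; ring⟩, rfl⟩
  · rintro ⟨x, y, z⟩ h
    rw [TT_mem] at h ⊢
    exact ⟨h.2.1, h.1, by rw [← h.2.2]; ring⟩
  · rintro ⟨x, y, z⟩ h; rfl

def zag (p : ℕ × ℕ × ℕ) : ℕ × ℕ × ℕ :=
  if p.1 + p.2.2 < p.2.1 then (p.1 + 2 * p.2.2, p.2.2, p.2.1 - p.1 - p.2.2)
  else if p.1 < 2 * p.2.1 then (2 * p.2.1 - p.1, p.2.1, p.1 + p.2.2 - p.2.1)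
  else (p.1 - 2 * p.2.1, p.1 + p.2.2 - p.2.1, p.2.1)

lemma x_odd {x t k : ℕ} (hk : k % 4 = 1) (h : x ^ 2 + 4 * t = k) : x % 2 = 1 := by
  rcases Nat.mod_two_eq_zero_or_one x with h0 | h0
  · obtain ⟨j, rfl⟩ : ∃ j, x = 2 * j := ⟨x / 2, by omega⟩
    ring_nf at h; omega
  · exact h0

def Dlt (k : ℕ) : Finset ℕ := k.divisors.filter (fun i => i * i < k)

lemma TT_Dlt (k : ℕ) (hk : k % 4 = 1) :
    ((TT k).filter (fun p => p.1 + p.2.2 ≠ p.2.1)).card % 2 = (Dlt k).card % 2 := by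
  rw [card_parity _ zag]
  · congr 1
    symm
    refine card_bij (fun x _ => (x, x, (k / x - x) / 4)) ?_ ?_ ?_
    · intro x h
      simp only [Dlt, mem_filter, Nat.mem_divisors] at h
      obtain ⟨⟨⟨m, hm⟩, h0⟩, hlt⟩ := h
      have hx : 0 < x := by rcases Nat.eq_zero_or_pos x with h | h; (subst h; simp at hm; omega); exact h
      have hm2 : k / x = m := by rw [hm]; exact Nat.mul_div_cancel_left m hx
      have hxm : x < m := by rw [hm] at hlt; exact Nat.lt_of_mul_lt_mul_left hlt
      have hmod : (x * m) % 4 = 1 := by rw [← hm]; exact hk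
      have h5 : x % 4 = m % 4 := by
        rw [Nat.mul_mod] at hmod
        have := Nat.mod_lt x (show 0 < 4 by norm_num)
        have := Nat.mod_lt m (show 0 < 4 by norm_num)
        generalize x % 4 = a at *
        generalize m % 4 = b at *
        interval_cases a <;> interval_cases b <;> omega
      rw [hm2]
      obtain ⟨z, hz⟩ : ∃ z, m = x + 4 * z := ⟨(m - x) / 4, by omega⟩
      have hz2 : (m - x) / 4 = z := by omega
      rw [hz2]
      simp only [mem_filter, TT_mem]
      refine ⟨⟨⟨hx, by omega, ?_⟩, by omega⟩, ?_⟩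
      · rw [hm, hz]; ring
      · unfold zag
        rw [if_neg (by simp), if_pos (by simp; omega)]
        simp; omega
    · intro a _ b _ h; simp at h; exact h.1
    · rintro ⟨x, y, z⟩ h
      simp only [mem_filter, TT_mem] at h
      obtain ⟨⟨⟨h1, h2, h3⟩, h4⟩, h5⟩ := h
      have hx := x_odd hk h3
      have hxy : x = y := by
        unfold zag at h5
        split_ifs at h5 with h6 h7 <;> simp only [Prod.mk.injEq] at h5 h6 <;> omega
      subst hxy
      have hk2 : k = x * (x + 4 * z) := by rw [← h3]; ring
      refine ⟨x, ?_, ?_⟩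
      · simp only [Dlt, mem_filter, Nat.mem_divisors]
        refine ⟨⟨⟨_, hk2⟩, by omega⟩, ?_⟩
        rw [hk2]; exact Nat.mul_lt_mul_of_pos_left (by omega) h1
      · have : k / x = x + 4 * z := by rw [hk2]; exact Nat.mul_div_cancel_left _ h1
        rw [this]; simp
  · rintro ⟨x, y, z⟩ h
    simp only [mem_filter, TT_mem] at h
    obtain ⟨⟨h1, h2, h3⟩, h4⟩ := h
    have hx := x_odd hk h3
    unfold zag
    split_ifs with h6 h7 <;> simp only [mem_filter, TT_mem] at h6 ⊢
    · obtain ⟨w, rfl⟩ := Nat.exists_eq_add_of_lt h6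
      refine ⟨⟨h2, by omega, ?_⟩, by omega⟩
      rw [show x + z + w + 1 - x - z = w + 1 by omega, ← h3]; ring
    · simp only at h7
      refine ⟨⟨h1, by omega, ?_⟩, by omega⟩
      obtain ⟨w, hw⟩ := Nat.exists_eq_add_of_lt h7
      obtain ⟨t, ht⟩ := Nat.exists_eq_add_of_le (not_lt.1 h6)
      rw [show x + z - y = t by omega, show 2 * y - x = w + 1 by omega, ← h3]
      zify at hw ht ⊢
      rw [show (w : ℤ) = 2 * y - x - 1 by omega, show (t : ℤ) = x + z - y by omega]; ring
    · simp only at h7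
      refine ⟨⟨by omega, h1, ?_⟩, by omega⟩
      obtain ⟨w, hw⟩ := Nat.exists_eq_add_of_le (not_lt.1 h7)
      rw [show x - 2 * y = w by omega, show x + z - y = w + y + z by omega, ← h3, hw]; ring
  · rintro ⟨x, y, z⟩ h
    simp only [mem_filter, TT_mem] at h
    obtain ⟨⟨h1, h2, h3⟩, h4⟩ := h
    have hx := x_odd hk h3
    unfold zag
    by_cases h6 : x + z < y
    · simp only [h6, if_true]
      rw [if_neg (by omega), if_neg (by omega)]
      simp only [Prod.mk.injEq, true_and, and_true]; omega
    · by_cases h7 : x < 2 * y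
      · simp only [h6, h7, if_true, if_false]
        rw [if_neg (by omega), if_pos (by omega)]
        simp only [Prod.mk.injEq, true_and, and_true]; omega
      · simp only [h6, h7, if_false]
        rw [if_pos (by omega)]
        simp only [Prod.mk.injEq, true_and, and_true]; omega

lemma TT_bd_sq (s : ℕ) (hs : s % 2 = 1) :
    ((TT (s * s)).filter (fun p => ¬ p.1 + p.2.2 ≠ p.2.1)).card = (s - 1) / 2 := by
  rw [← card_range ((s - 1) / 2)]
  symm
  refine card_bij (fun j _ => (s - 2 * (j + 1), s - (j + 1), j + 1)) ?_ ?_ ?_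
  · intro j hj
    rw [mem_range] at hj
    simp only [mem_filter, TT_mem]
    refine ⟨⟨by omega, by omega, ?_⟩, by omega⟩
    obtain ⟨t, rfl⟩ : ∃ t, s = 2 * (j + 1) + t := ⟨s - 2 * (j + 1), by omega⟩
    rw [show 2 * (j + 1) + t - 2 * (j + 1) = t by omega,
      show 2 * (j + 1) + t - (j + 1) = t + j + 1 by omega]; ring
  · intro a _ b _ h; simp at h; omega
  · rintro ⟨x, y, z⟩ h
    simp only [mem_filter, TT_mem, not_not] at h
    obtain ⟨⟨h1, h2, h3⟩, h4⟩ := h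
    have : (y + z) = s := by
      apply Nat.mul_self_inj.1
      rw [← h3, ← h4]; ring
    have hx : x % 2 = 1 := by omega
    refine ⟨z - 1, by rw [mem_range]; omega, ?_⟩
    simp only [Prod.mk.injEq]; omega

lemma TT_bd_nsq (k : ℕ) (hk : ¬ ∃ s, k = s * s) :
    ((TT k).filter (fun p => ¬ p.1 + p.2.2 ≠ p.2.1)).card = 0 := by
  rw [card_eq_zero, eq_empty_iff_forall_notMem]
  rintro ⟨x, y, z⟩ h
  simp only [mem_filter, TT_mem, not_not] at h
  obtain ⟨⟨h1, h2, h3⟩, h4⟩ := h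
  exact hk ⟨y + z, by rw [← h3, ← h4]; ring⟩

open Classical in
lemma Q11_NN (k : ℕ) (hk : k % 4 = 1) :
    Q 1 1 (2 * k) = 2 * (NN k).card + if ∃ s, k = s * s then 1 else 0 := by
  unfold Q
  set P := ((range (2 * k + 1) ×ˢ range (2 * k + 1)).filter
    (fun p => Odd p.1 ∧ Odd p.2 ∧ 1 * p.1 ^ 2 + 1 * p.2 ^ 2 = 2 * k)) with hP
  have hm : ∀ x y, (x, y) ∈ P ↔ x % 2 = 1 ∧ y % 2 = 1 ∧ x ^ 2 + y ^ 2 = 2 * k := by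
    intro x y; rw [hP, Q_mem (by norm_num) (by norm_num)]; simp
  have e1 := card_filter_add_card_filter_not (s := P) (fun p => p.1 < p.2)
  have e2 := card_filter_add_card_filter_not (s := P.filter (fun p => ¬ p.1 < p.2)) (fun p => p.2 < p.1)
  have h1 : (P.filter (fun p => p.1 < p.2)).card = (NN k).card := by
    symm
    refine card_bij (fun p _ => ((p.1 - 2 * p.2) + (2 * p.2 - p.1), p.1 + 2 * p.2)) ?_ ?_ ?_
    · rintro ⟨x, y⟩ h
      rw [NN_mem] at h
      have hx := x_odd hk h.2
      simp only [mem_filter, hm]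
      refine ⟨⟨by omega, by omega, ?_⟩, by omega⟩
      rw [← h.2]
      rcases le_total x (2 * y) with h' | h'
      · obtain ⟨t, ht⟩ := Nat.exists_eq_add_of_le h'
        rw [show x - 2 * y + (2 * y - x) = t by omega]
        zify at ht ⊢; rw [show (t : ℤ) = 2 * y - x by omega]; ring
      · obtain ⟨t, rfl⟩ := Nat.exists_eq_add_of_le h'
        rw [show 2 * y + t - 2 * y + (2 * y - (2 * y + t)) = t by omega]
        ring
    · rintro ⟨x, y⟩ h ⟨x', y'⟩ h' he
      rw [NN_mem] at h h'
      have hx := x_odd hk h.2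
      have hx' := x_odd hk h'.2
      simp only [Prod.mk.injEq] at he ⊢
      omega
    · rintro ⟨x, y⟩ h
      simp only [mem_filter, hm] at h
      obtain ⟨⟨h1, h2, h3⟩, h4⟩ := h
      by_cases hc : (x + y) / 2 % 2 = 1
      · refine ⟨((x + y) / 2, (y - x) / 4), ?_, ?_⟩
        · rw [NN_mem]
          refine ⟨by omega, ?_⟩
          have a1 : 2 * (((x + y) / 2 : ℕ) : ℤ) = x + y := by omega
          have a2 : 4 * (((y - x) / 4 : ℕ) : ℤ) = y - x := by omega
          zify at h3
          generalize (x + y) / 2 = p at *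
          generalize (y - x) / 4 = q at *
          zify
          have b1 : (2 * (p : ℤ)) ^ 2 = (x + y) ^ 2 := by rw [a1]
          have b2 : (4 * (q : ℤ)) ^ 2 = (y - x) ^ 2 := by rw [a2]
          linarith
        · simp only [Prod.mk.injEq]; omega
      · refine ⟨((y - x) / 2, (x + y) / 4), ?_, ?_⟩
        · rw [NN_mem]
          refine ⟨by omega, ?_⟩
          have a1 : 2 * (((y - x) / 2 : ℕ) : ℤ) = y - x := by omega
          have a2 : 4 * (((x + y) / 4 : ℕ) : ℤ) = x + y := by omega
          zify at h3
          generalize (y - x) / 2 = p at *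
          generalize (x + y) / 4 = q at *
          zify
          have b1 : (2 * (p : ℤ)) ^ 2 = (y - x) ^ 2 := by rw [a1]
          have b2 : (4 * (q : ℤ)) ^ 2 = (x + y) ^ 2 := by rw [a2]
          linarith
        · simp only [Prod.mk.injEq]; omega
  have h2 : ((P.filter (fun p => ¬ p.1 < p.2)).filter (fun p => p.2 < p.1)).card =
      (P.filter (fun p => p.1 < p.2)).card := by
    refine card_bij (fun p _ => (p.2, p.1)) ?_ ?_ ?_
    · rintro ⟨x, y⟩ h
      simp only [mem_filter, hm] at h ⊢; omega
    · rintro ⟨x, y⟩ _ ⟨x', y'⟩ _ he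
      simp only [Prod.mk.injEq] at he ⊢; omega
    · rintro ⟨x, y⟩ h
      refine ⟨(y, x), ?_, rfl⟩
      simp only [mem_filter, hm] at h ⊢; omega
  have h3 : ((P.filter (fun p => ¬ p.1 < p.2)).filter (fun p => ¬ p.2 < p.1)).card =
      if ∃ s, k = s * s then 1 else 0 := by
    split_ifs with hs
    · obtain ⟨s, rfl⟩ := hs
      rw [card_eq_one]
      refine ⟨(s, s), ?_⟩
      have hs : s % 2 = 1 := x_odd (t := 0) hk (by ring)
      ext ⟨x, y⟩
      simp only [mem_filter, hm, mem_singleton, Prod.mk.injEq]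
      constructor
      · rintro ⟨⟨⟨h1, h2, h3⟩, h4⟩, h5⟩
        have hxy : x = y := by omega
        subst hxy
        have : x = s := Nat.mul_self_inj.1 (by nlinarith)
        exact ⟨this, this⟩
      · rintro ⟨rfl, rfl⟩
        refine ⟨⟨⟨hs, hs, by ring⟩, by omega⟩, by omega⟩
    · rw [card_eq_zero, eq_empty_iff_forall_notMem]
      rintro ⟨x, y⟩ h
      simp only [mem_filter, hm] at h
      obtain ⟨⟨⟨h1, h2, h3⟩, h4⟩, h5⟩ := h
      have hxy : x = y := by omega
      subst hxy
      exact hs ⟨x, by nlinarith⟩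
  omega

lemma mod4_mul {x m k : ℕ} (hk : k % 4 = 1) (h : k = x * m) : (x + m) % 4 = 2 := by
  have hmod : (x * m) % 4 = 1 := by rw [← h]; exact hk
  rw [Nat.mul_mod] at hmod
  rw [Nat.add_mod]
  have := Nat.mod_lt x (show 0 < 4 by norm_num)
  have := Nat.mod_lt m (show 0 < 4 by norm_num)
  generalize x % 4 = a at *
  generalize m % 4 = b at *
  interval_cases a <;> interval_cases b <;> omega

/-- splitting a divisor sum at the square root -/
lemma sum_split (k : ℕ) (hk : 0 < k) (f : ℕ → ℕ) :
    ∑ i ∈ k.divisors, f i = ∑ i ∈ Dlt k, (f i + f (k / i)) +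
      ∑ i ∈ k.divisors.filter (fun i => i * i = k), f i := by
  rw [← sum_filter_add_sum_filter_not k.divisors (fun i => i * i < k),
    ← sum_filter_add_sum_filter_not (k.divisors.filter (fun i => ¬ i * i < k)) (fun i => i * i = k)]
  have h1 : (k.divisors.filter (fun i => ¬ i * i < k)).filter (fun i => i * i = k) =
      k.divisors.filter (fun i => i * i = k) := by
    ext i; simp only [mem_filter]
    constructor
    · rintro ⟨⟨a, b⟩, c⟩; exact ⟨a, c⟩
    · rintro ⟨a, c⟩; exact ⟨⟨a, by omega⟩, c⟩
  have h2 : ∑ i ∈ (k.divisors.filter (fun i => ¬ i * i < k)).filter (fun i => ¬ i * i = k), f i =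
      ∑ i ∈ Dlt k, f (k / i) := by
    refine sum_bij' (fun i _ => k / i) (fun i _ => k / i) ?_ ?_ ?_ ?_ ?_
    · intro i hi
      simp only [Dlt, mem_filter, Nat.mem_divisors] at hi ⊢
      obtain ⟨⟨⟨⟨m, rfl⟩, h0⟩, h1⟩, h2⟩ := hi
      have hi0 := Nat.pos_of_mul_pos_right hk
      have hm0 := Nat.pos_of_mul_pos_left hk
      rw [Nat.mul_div_cancel_left _ (by positivity)]
      refine ⟨⟨Dvd.intro_left _ rfl, h0⟩, ?_⟩
      have h3 : m < i := Nat.lt_of_mul_lt_mul_left (a := i) (by omega)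
      nlinarith
    · intro i hi
      simp only [Dlt, mem_filter, Nat.mem_divisors] at hi ⊢
      obtain ⟨⟨⟨m, rfl⟩, h0⟩, h1⟩ := hi
      have hi0 := Nat.pos_of_mul_pos_right hk
      have hm0 := Nat.pos_of_mul_pos_left hk
      rw [Nat.mul_div_cancel_left _ (by positivity)]
      have h3 : i < m := Nat.lt_of_mul_lt_mul_left (a := i) (by omega)
      have : i * m < m * m := by nlinarith
      refine ⟨⟨⟨Dvd.intro_left _ rfl, h0⟩, ?_⟩, ?_⟩ <;> omega
    · intro i hi
      simp only [mem_filter, Nat.mem_divisors] at hi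
      exact Nat.div_div_self hi.1.1.1 (by omega)
    · intro i hi
      simp only [Dlt, mem_filter, Nat.mem_divisors] at hi
      exact Nat.div_div_self hi.1.1 (by omega)
    · intro i hi
      simp only [mem_filter, Nat.mem_divisors] at hi
      rw [Nat.div_div_self hi.1.1.1 (by omega)]
  rw [h1, h2, sum_add_distrib, ← Dlt]
  ring

lemma filter_sq (s : ℕ) (hs : 0 < s) : (s * s).divisors.filter (fun i => i * i = s * s) = {s} := by
  ext i
  simp only [mem_filter, Nat.mem_divisors, mem_singleton]
  constructor
  · intro h; exact Nat.mul_self_inj.1 h.2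
  · rintro rfl; exact ⟨⟨dvd_mul_right _ _, by positivity⟩, rfl⟩

lemma filter_nsq (k : ℕ) (hk : ¬ ∃ s, k = s * s) : k.divisors.filter (fun i => i * i = k) = ∅ := by
  rw [eq_empty_iff_forall_notMem]
  intro i hi
  exact hk ⟨i, (mem_filter.1 hi).2.symm⟩

def sg (n : ℕ) : ℕ := ∑ i ∈ n.divisors, i

lemma Q11 (k : ℕ) (hk : k % 4 = 1) : Q 1 1 (2 * k) % 4 = sg k % 4 := by
  classical
  have hQ := Q11_NN k hk
  have h1 := TT_NN k
  have h2 := TT_Dlt k hk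
  have h3 := card_filter_add_card_filter_not (s := TT k) (fun p => p.1 + p.2.2 ≠ p.2.1)
  have h4 : sg k = _ := sum_split k (by omega) (fun i => i)
  have h5 : (∑ i ∈ Dlt k, (i + k / i)) % 4 = (2 * (Dlt k).card) % 4 := by
    rw [mul_comm, ← smul_eq_mul, ← sum_const, sum_nat_mod, sum_nat_mod _ _ (fun _ => 2)]
    congr 1
    refine sum_congr rfl fun i hi => ?_
    simp only [Dlt, mem_filter, Nat.mem_divisors] at hi
    exact mod4_mul hk (Nat.mul_div_cancel' hi.1.1).symm
  by_cases hs : ∃ s, k = s * s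
  · rw [if_pos hs] at hQ
    obtain ⟨s, rfl⟩ := hs
    have hs : s % 2 = 1 := x_odd (t := 0) hk (by ring)
    rw [filter_sq s (by omega), sum_singleton] at h4
    rw [TT_bd_sq s hs] at h3
    omega
  · rw [if_neg hs] at hQ
    rw [filter_nsq k hs, sum_empty] at h4
    rw [TT_bd_nsq k hs] at h3
    omega

lemma sg_three (c : ℕ) (hc : c % 4 = 3) : sg c % 4 = 0 := by
  have hs : ¬ ∃ s, c = s * s := by
    rintro ⟨s, rfl⟩
    rw [Nat.mul_mod] at hc
    have := Nat.mod_lt s (show 0 < 4 by norm_num)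
    generalize s % 4 = a at *
    interval_cases a <;> omega
  have h4 : sg c = _ := sum_split c (by omega) (fun i => i)
  rw [filter_nsq c hs, sum_empty, add_zero] at h4
  rw [h4, sum_nat_mod, sum_eq_zero, Nat.zero_mod]
  intro i hi
  simp only [Dlt, mem_filter, Nat.mem_divisors] at hi
  have h5 := Nat.mul_div_cancel' hi.1.1
  generalize c / i = m at *
  have hmod : (i * m) % 4 = 3 := by rw [h5]; exact hc
  rw [Nat.mul_mod] at hmod
  rw [Nat.add_mod]
  have := Nat.mod_lt i (show 0 < 4 by norm_num)
  have := Nat.mod_lt m (show 0 < 4 by norm_num)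
  generalize i % 4 = a at *
  generalize m % 4 = b at *
  interval_cases a <;> interval_cases b <;> omega

lemma sg_parity (c : ℕ) (hc : c % 2 = 1) : sg c % 2 = 1 ↔ ∃ s, c = s * s := by
  have h4 : sg c = _ := sum_split c (by omega) (fun i => i)
  have h5 : (∑ i ∈ Dlt c, (i + c / i)) % 2 = 0 := by
    rw [sum_nat_mod, sum_eq_zero, Nat.zero_mod]
    intro i hi
    simp only [Dlt, mem_filter, Nat.mem_divisors] at hi
    have h5 := Nat.mul_div_cancel' hi.1.1
    generalize c / i = m at *
    have hmod : (i * m) % 2 = 1 := by rw [h5]; exact hc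
    rw [Nat.mul_mod] at hmod
    rcases Nat.mod_two_eq_zero_or_one i with h | h <;> rcases Nat.mod_two_eq_zero_or_one m with h' | h' <;>
      simp [h, h'] at hmod <;> omega
  by_cases hs : ∃ s, c = s * s
  · simp only [hs, iff_true]
    obtain ⟨s, rfl⟩ := hs
    have hs : s % 2 = 1 := by
      rcases Nat.mod_two_eq_zero_or_one s with h | h
      · rw [Nat.mul_mod, h] at hc; simp at hc
      · exact h
    rw [filter_sq s (by omega), sum_singleton] at h4
    omega
  · simp only [hs, iff_false]
    rw [filter_nsq c hs, sum_empty] at h4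
    omega

lemma tau_parity (c : ℕ) (hc : 0 < c) : c.divisors.card % 2 = 1 ↔ ∃ s, c = s * s := by
  have h4 := sum_split c hc (fun _ => 1)
  rw [← card_eq_sum_ones, sum_const, smul_eq_mul] at h4
  by_cases hs : ∃ s, c = s * s
  · simp only [hs, iff_true]
    obtain ⟨s, rfl⟩ := hs
    rw [filter_sq s (Nat.pos_of_mul_pos_left hc), sum_singleton] at h4
    omega
  · simp only [hs, iff_false]
    rw [filter_nsq c hs, sum_empty] at h4
    omega
end RB

namespace RB
open Finset

def BB (n : ℕ) : Finset ℕ := n.divisors.filter (fun i => i % 2 = 1 ∧ i % 3 ≠ 0)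

lemma BB_eq (e y c : ℕ) (h2 : c % 2 = 1) (h3 : c % 3 ≠ 0) : BB (2 ^ e * 3 ^ y * c) = c.divisors := by
  ext i
  simp only [BB, mem_filter, Nat.mem_divisors]
  constructor
  · rintro ⟨⟨h, _⟩, hi2, hi3⟩
    have a2 : Nat.Coprime i (2 ^ e) := by
      apply Nat.Coprime.pow_right
      rw [Nat.coprime_comm, Nat.Prime.coprime_iff_not_dvd Nat.prime_two]; omega
    have a3 : Nat.Coprime i (3 ^ y) := by
      apply Nat.Coprime.pow_right
      rw [Nat.coprime_comm, Nat.Prime.coprime_iff_not_dvd Nat.prime_three]; omega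
    exact ⟨(a2.mul_right a3).dvd_of_dvd_mul_left h, by omega⟩
  · rintro ⟨h, h0⟩
    refine ⟨⟨Dvd.dvd.mul_left h _, by positivity⟩, ?_, ?_⟩
    · by_contra hh
      have : 2 ∣ c := (show 2 ∣ i by omega).trans h
      omega
    · intro hh
      have : 3 ∣ c := (show 3 ∣ i by omega).trans h
      omega

lemma A_even (n : ℕ) (hn : 0 < n) (f : ℕ → ℕ) :
    ∑ i ∈ (2 * n).divisors.filter A, f i = ∑ i ∈ BB n, (f i + f (2 * i)) := by
  rw [← sum_filter_add_sum_filter_not _ (fun i => i % 2 = 1), sum_add_distrib]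
  congr 1
  · apply sum_congr _ (fun _ _ => rfl)
    ext i
    simp only [BB, mem_filter, Nat.mem_divisors, A]
    constructor
    · rintro ⟨⟨⟨h1, h0⟩, h2, h3⟩, h4⟩
      refine ⟨⟨?_, by omega⟩, h4, by omega⟩
      have : Nat.Coprime i 2 := by
        rw [Nat.coprime_comm, Nat.Prime.coprime_iff_not_dvd Nat.prime_two]; omega
      exact this.dvd_of_dvd_mul_left h1
    · rintro ⟨⟨h1, h0⟩, h2, h3⟩
      exact ⟨⟨⟨Dvd.dvd.mul_left h1 _, by omega⟩, by omega, by omega⟩, h2⟩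
  · symm
    refine sum_bij (fun i _ => 2 * i) ?_ ?_ ?_ (fun _ _ => rfl)
    · intro i
      simp only [BB, mem_filter, Nat.mem_divisors, A]
      rintro ⟨⟨h1, h0⟩, h2, h3⟩
      exact ⟨⟨⟨Nat.mul_dvd_mul_left 2 h1, by omega⟩, by omega, by omega⟩, by omega⟩
    · intro i _ j _ h; omega
    · intro i
      simp only [BB, mem_filter, Nat.mem_divisors, A]
      rintro ⟨⟨⟨h1, h0⟩, h2, h3⟩, h4⟩
      obtain ⟨j, rfl⟩ : ∃ j, i = 2 * j := ⟨i / 2, by omega⟩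
      exact ⟨j, ⟨⟨Nat.dvd_of_mul_dvd_mul_left (by norm_num) h1, by omega⟩, by omega, by omega⟩, rfl⟩

lemma d_even (n : ℕ) (hn : 0 < n) : d (2 * n) = 2 * (BB n).card := by
  rw [d, card_eq_sum_ones, A_even n hn, sum_const, smul_eq_mul]; ring

lemma d_odd (n : ℕ) (hn : n % 2 = 1) : d n = (BB n).card := by
  rw [d, BB]
  congr 1
  ext i
  simp only [mem_filter, Nat.mem_divisors, A]
  constructor
  · rintro ⟨⟨h1, h0⟩, h2, h3⟩
    refine ⟨⟨h1, h0⟩, ?_, by omega⟩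
    by_contra hh
    have : 2 ∣ n := (show 2 ∣ i by omega).trans h1
    omega
  · rintro ⟨⟨h1, h0⟩, h2, h3⟩
    exact ⟨⟨h1, h0⟩, by omega, by omega⟩

lemma W_eq (e y c : ℕ) (h2 : c % 2 = 1) (h3 : c % 3 ≠ 0) :
    W (2 * (2 ^ e * 3 ^ y * c)) = 3 * (2 ^ e * 3 ^ y) * sg c := by
  have hc : 0 < c := by omega
  rw [W, A_even _ (by positivity), BB_eq e y c h2 h3, sg, ← Nat.sum_div_divisors c (fun i => i), mul_sum]
  refine sum_congr rfl fun i hi => ?_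
  have hi' := (Nat.mem_divisors.1 hi).1
  rw [Nat.mul_div_mul_left _ _ (by norm_num), ← mul_assoc, Nat.mul_div_assoc _ hi', Nat.mul_div_assoc _ hi']
  ring

lemma decomp (n : ℕ) (hn : 0 < n) : ∃ e y c, n = 2 ^ e * 3 ^ y * c ∧ c % 2 = 1 ∧ c % 3 ≠ 0 := by
  obtain ⟨e, n', h1, h2⟩ := Nat.exists_eq_pow_mul_and_not_dvd (n := n) (by omega) 2 (by norm_num)
  obtain ⟨y, c, h3, h4⟩ := Nat.exists_eq_pow_mul_and_not_dvd (n := n') (by rintro rfl; simp at h1) 3 (by norm_num)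
  refine ⟨e, y, c, ?_, ?_, by omega⟩
  · rw [h2, h4]; ring
  · by_contra hh
    apply h1; rw [h4]; exact Dvd.dvd.mul_left (by omega) _

lemma three_unique (a : ℕ) : ∀ a' b b' : ℕ, b % 3 ≠ 0 → b' % 3 ≠ 0 → 3 ^ a * b = 3 ^ a' * b' →
    a = a' ∧ b = b' := by
  induction a with
  | zero =>
    intro a' b b' h h' he
    cases a' with
    | zero => simpa using he
    | succ a' => rw [pow_succ, pow_zero] at he; exfalso; apply h; rw [one_mul] at he; rw [he]
                 rw [mul_comm (3 ^ a') 3, mul_assoc]; simp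
  | succ a ih =>
    intro a' b b' h h' he
    cases a' with
    | zero => rw [pow_succ, pow_zero] at he; exfalso; apply h'; rw [one_mul] at he; rw [← he]
              rw [mul_comm (3 ^ a) 3, mul_assoc]; simp
    | succ a' =>
      have := ih a' b b' h h' (by rw [pow_succ, pow_succ] at he; nlinarith)
      exact ⟨by omega, this.2⟩

lemma sq_mod3 (w : ℕ) (h : ¬ 3 ∣ w) : (w * w) % 3 ≠ 0 := by
  intro h'
  rcases (Nat.Prime.dvd_mul Nat.prime_three).1 (Nat.dvd_of_mod_eq_zero h') with h | h <;> contradiction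

lemma pow3_odd (y : ℕ) : 3 ^ y % 2 = 1 := by
  rw [Nat.pow_mod]; simp

lemma isS_iff (y c : ℕ) (h2 : c % 2 = 1) (h3 : c % 3 ≠ 0) : isS (3 ^ y * c) ↔ ∃ s, c = s * s := by
  constructor
  · rintro ⟨u, hu, h⟩
    have hu0 : u ≠ 0 := by rintro rfl; simp at hu
    obtain ⟨j, w, hw, rfl⟩ := Nat.exists_eq_pow_mul_and_not_dvd hu0 3 (by norm_num)
    refine ⟨w, ?_⟩
    rcases h with h | h
    · exact (three_unique y (2 * j) c (w * w) h3 (sq_mod3 w hw) (by rw [h]; ring)).2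
    · exact (three_unique y (2 * j + 1) c (w * w) h3 (sq_mod3 w hw) (by rw [h]; ring)).2
  · rintro ⟨s, rfl⟩
    have hs : s % 2 = 1 := by
      rcases Nat.mod_two_eq_zero_or_one s with h | h
      · rw [Nat.mul_mod, h] at h2; simp at h2
      · exact h
    refine ⟨3 ^ (y / 2) * s, ?_, ?_⟩
    · rw [Nat.odd_mul]; exact ⟨Nat.odd_iff.2 (pow3_odd _), Nat.odd_iff.2 hs⟩
    · rcases Nat.mod_two_eq_zero_or_one y with h | h
      · left
        obtain ⟨j, rfl⟩ : ∃ j, y = 2 * j := ⟨y / 2, by omega⟩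
        rw [show 2 * j / 2 = j by omega]; ring
      · right
        obtain ⟨j, rfl⟩ : ∃ j, y = 2 * j + 1 := ⟨y / 2, by omega⟩
        rw [show (2 * j + 1) / 2 = j by omega]; ring

noncomputable section
open Classical in
def ss (α a : ℕ) : ℕ := if ∃ u, Odd u ∧ a = α * u ^ 2 then 1 else 0

lemma isS_odd {a : ℕ} (h : isS a) : a % 2 = 1 := by
  obtain ⟨u, hu, h | h⟩ := h <;> have := odd_sq_mod u (Nat.odd_iff.1 hu) <;> omega

lemma d_parity (a : ℕ) : ∃ t, (d a : ℤ) = (ss 1 a + ss 3 a : ℕ) + 2 * t := by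
  classical
  have h1 : ss 1 a + ss 3 a = if isS a then 1 else 0 := by
    unfold ss isS
    by_cases h : ∃ u, Odd u ∧ a = 1 * u ^ 2
    · have h' : ¬ ∃ u, Odd u ∧ a = 3 * u ^ 2 := by
        rintro ⟨v, hv, h'⟩
        obtain ⟨u, hu, h⟩ := h
        have := odd_sq_mod u (Nat.odd_iff.1 hu)
        have := odd_sq_mod v (Nat.odd_iff.1 hv)
        omega
      rw [if_pos h, if_neg h', if_pos]
      obtain ⟨u, hu, h⟩ := h
      exact ⟨u, hu, Or.inl (by omega)⟩
    · by_cases h' : ∃ u, Odd u ∧ a = 3 * u ^ 2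
      · rw [if_neg h, if_pos h', if_pos]
        obtain ⟨u, hu, h⟩ := h'
        exact ⟨u, hu, Or.inr h⟩
      · rw [if_neg h, if_neg h', if_neg]
        rintro ⟨u, hu, h1 | h1⟩
        · exact h ⟨u, hu, by omega⟩
        · exact h' ⟨u, hu, h1⟩
  rw [h1]
  have h2 : d a % 2 = if isS a then 1 else 0 := by
    rcases Nat.mod_two_eq_zero_or_one a with h | h
    · rw [if_neg (fun hh => by have := isS_odd hh; omega)]
      rcases Nat.eq_zero_or_pos a with rfl | h0
      · simp [d]
      · obtain ⟨n, rfl⟩ : ∃ n, a = 2 * n := ⟨a / 2, by omega⟩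
        rw [d_even n (by omega)]; omega
    · rw [d_odd a h]
      obtain ⟨e, y, c, ha, hc2, hc3⟩ := decomp a (by omega)
      have he : e = 0 := by
        rcases e with _ | e
        · rfl
        · exfalso; rw [pow_succ, mul_comm (2 ^ e) 2, mul_assoc, mul_assoc] at ha; omega
      subst he
      have hB := BB_eq 0 y c hc2 hc3
      rw [← ha] at hB
      rw [hB]
      have hS := isS_iff y c hc2 hc3
      rw [pow_zero, one_mul] at ha
      rw [← ha, ← tau_parity c (by omega)] at hS
      split_ifs with hh
      · exact hS.1 hh
      · have := mt hS.2 hh; omega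
  exact ⟨(d a / 2 : ℕ), by omega⟩

lemma sum_ss (α β N : ℕ) (ha : 0 < α) (hb : 0 < β) :
    ∑ p ∈ antidiagonal N, ss α p.1 * ss β p.2 = Q α β N := by
  classical
  have : ∀ p ∈ antidiagonal N, ss α p.1 * ss β p.2 =
      if (∃ u, Odd u ∧ p.1 = α * u ^ 2) ∧ ∃ u, Odd u ∧ p.2 = β * u ^ 2 then 1 else 0 := by
    intro p _
    unfold ss
    split_ifs <;> simp_all
  rw [sum_congr rfl this, ← card_filter, Q]
  symm
  refine card_bij (fun p _ => (α * p.1 ^ 2, β * p.2 ^ 2)) ?_ ?_ ?_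
  · rintro ⟨x, y⟩ h
    rw [Q_mem ha hb] at h
    simp only [mem_filter, HasAntidiagonal.mem_antidiagonal]
    exact ⟨h.2.2, ⟨x, Nat.odd_iff.2 h.1, rfl⟩, ⟨y, Nat.odd_iff.2 h.2.1, rfl⟩⟩
  · rintro ⟨x, y⟩ _ ⟨x', y'⟩ _ h
    simp only [Prod.mk.injEq] at h ⊢
    exact ⟨Nat.pow_left_injective (n := 2) (by norm_num) (Nat.eq_of_mul_eq_mul_left ha h.1),
      Nat.pow_left_injective (n := 2) (by norm_num) (Nat.eq_of_mul_eq_mul_left hb h.2)⟩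
  · rintro ⟨a, b⟩ h
    simp only [mem_filter, HasAntidiagonal.mem_antidiagonal] at h
    obtain ⟨h0, ⟨u, hu, rfl⟩, ⟨v, hv, rfl⟩⟩ := h
    exact ⟨(u, v), (Q_mem ha hb u v).2 ⟨Nat.odd_iff.1 hu, Nat.odd_iff.1 hv, h0⟩, rfl⟩

lemma sum_swap (N : ℕ) (f g : ℕ → ℤ) :
    ∑ p ∈ antidiagonal N, f p.1 * g p.2 = ∑ p ∈ antidiagonal N, g p.1 * f p.2 := by
  rw [← Finset.Nat.sum_antidiagonal_swap]
  refine sum_congr rfl fun p _ => ?_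
  simp [mul_comm]

lemma sum_dd (N : ℕ) : ∃ t : ℤ, ∑ p ∈ antidiagonal N, (d p.1 : ℤ) * d p.2 =
    (Q 1 1 N + 2 * Q 1 3 N + Q 3 3 N : ℕ) + 4 * t := by
  choose t ht using d_parity
  refine ⟨∑ p ∈ antidiagonal N, ((ss 1 p.1 + ss 3 p.1 : ℕ) : ℤ) * t p.2 +
    ∑ p ∈ antidiagonal N, t p.1 * t p.2, ?_⟩
  have h1 : ∑ p ∈ antidiagonal N, (d p.1 : ℤ) * d p.2 =
      ∑ p ∈ antidiagonal N, (ss 1 p.1 : ℤ) * ss 1 p.2 + ∑ p ∈ antidiagonal N, (ss 1 p.1 : ℤ) * ss 3 p.2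
      + ∑ p ∈ antidiagonal N, (ss 3 p.1 : ℤ) * ss 1 p.2 + ∑ p ∈ antidiagonal N, (ss 3 p.1 : ℤ) * ss 3 p.2
      + 2 * ∑ p ∈ antidiagonal N, ((ss 1 p.1 + ss 3 p.1 : ℕ) : ℤ) * t p.2
      + 2 * ∑ p ∈ antidiagonal N, t p.1 * ((ss 1 p.2 + ss 3 p.2 : ℕ) : ℤ)
      + 4 * ∑ p ∈ antidiagonal N, t p.1 * t p.2 := by
    simp only [mul_sum, ← sum_add_distrib]
    refine sum_congr rfl fun p _ => ?_
    rw [ht, ht]; push_cast; ring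
  rw [h1, sum_swap N t (fun a => ((ss 1 a + ss 3 a : ℕ) : ℤ)),
    sum_swap N (fun a => (ss 3 a : ℤ)) (fun a => (ss 1 a : ℤ)),
    ← sum_ss 1 1 N (by norm_num) (by norm_num), ← sum_ss 1 3 N (by norm_num) (by norm_num),
    ← sum_ss 3 3 N (by norm_num) (by norm_num)]
  push_cast; ring
end

lemma Q_zero (α β N : ℕ) (ha : 0 < α) (hb : 0 < β) (h : (α + β) % 8 ≠ N % 8) : Q α β N = 0 := by
  rw [Q, card_eq_zero, eq_empty_iff_forall_notMem]
  rintro ⟨x, y⟩ hh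
  rw [Q_mem ha hb] at hh
  obtain ⟨h1, h2, h3⟩ := hh
  apply h
  rw [← h3, Nat.add_mod (α * x ^ 2), Nat.mul_mod α, Nat.mul_mod β, odd_sq_mod x h1, odd_sq_mod y h2]
  simp [Nat.add_mod]

lemma Q33_mul (k : ℕ) : Q 3 3 (2 * (3 * k)) = Q 1 1 (2 * k) := by
  unfold Q
  refine card_bij (fun p _ => p) ?_ (fun _ _ _ _ h => h) ?_
  · rintro ⟨x, y⟩ h
    rw [Q_mem (by norm_num) (by norm_num)] at h ⊢
    omega
  · rintro ⟨x, y⟩ h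
    refine ⟨(x, y), ?_, rfl⟩
    rw [Q_mem (by norm_num) (by norm_num)] at h ⊢
    omega

lemma Q33_zero (n : ℕ) (h : n % 3 ≠ 0) : Q 3 3 (2 * n) = 0 := by
  rw [Q, card_eq_zero, eq_empty_iff_forall_notMem]
  rintro ⟨x, y⟩ hh
  rw [Q_mem (by norm_num) (by norm_num)] at hh
  omega

lemma pow3_mod4 (y : ℕ) : 3 ^ y % 4 = if y % 2 = 0 then 1 else 3 := by
  induction y with
  | zero => rfl
  | succ y ih => rw [pow_succ]; split_ifs at ih ⊢ <;> omega

lemma sg_pow3 (y : ℕ) : sg (3 ^ y) % 4 = if y % 2 = 0 then 1 else 0 := by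
  rw [sg, Nat.sum_divisors_prime_pow Nat.prime_three]
  induction y with
  | zero => rfl
  | succ y ih =>
    rw [sum_range_succ]
    have := pow3_mod4 (y + 1)
    split_ifs at ih this ⊢ <;> omega

lemma sg_mul3 (y c : ℕ) (h3 : c % 3 ≠ 0) : sg (3 ^ y * c) = sg (3 ^ y) * sg c := by
  apply Nat.Coprime.sum_divisors_mul
  apply Nat.Coprime.pow_left
  rw [Nat.Prime.coprime_iff_not_dvd Nat.prime_three]; omega

lemma mul_mod4 (a b r : ℕ) (h : a % 4 = r) : (a * b) % 4 = (r * b) % 4 := by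
  rw [← h, Nat.mod_mul_mod]

lemma M_W (n : ℕ) (hn : 1 ≤ n) (h : ¬ ∃ m : ℕ, Odd m ∧ 0 < m ∧ n = m ^ 2) :
    (Q 1 1 (2 * n) + 2 * Q 1 3 (2 * n) + Q 3 3 (2 * n)) % 4 = W (2 * n) % 4 := by
  classical
  obtain ⟨e, y, c, rfl, h2, h3⟩ := decomp n hn
  rw [W_eq e y c h2 h3]
  have p3 := pow3_mod4 y
  rcases e with _ | _ | e
  · simp only [pow_zero, one_mul, zero_add] at h ⊢
    have hyc := Nat.mul_mod (3 ^ y) c 4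
    rw [Q_zero 1 3 _ (by norm_num) (by norm_num) (by
      have := pow3_odd y
      have := Nat.mul_mod (3 ^ y) c 2
      rw [h2, pow3_odd] at this
      omega)]
    have hc4 : c % 4 = 1 ∨ c % 4 = 3 := by omega
    rw [mul_assoc]
    rcases Nat.mod_two_eq_zero_or_one y with hy | hy
    · rw [if_pos hy] at p3
      have hW := mul_mod4 _ (sg c) _ p3
      rcases hc4 with hc | hc
      · rw [p3, hc] at hyc
        rw [Q_zero 3 3 _ (by norm_num) (by norm_num) (by omega)]
        have q := Q11 (3 ^ y * c) (by omega)
        rw [sg_mul3 y c h3, mul_mod4 (sg (3 ^ y)) (sg c) 1 (by rw [sg_pow3, if_pos hy])] at q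
        have hsq : ¬ ∃ s, c = s * s := by
          rintro ⟨s, rfl⟩
          apply h
          have hs : s % 2 = 1 := by
            rcases Nat.mod_two_eq_zero_or_one s with h | h
            · rw [Nat.mul_mod, h] at h2; simp at h2
            · exact h
          have ho : Odd (3 ^ (y / 2) * s) := by
            rw [Nat.odd_mul]; exact ⟨Nat.odd_iff.2 (pow3_odd _), Nat.odd_iff.2 hs⟩
          refine ⟨3 ^ (y / 2) * s, ho, ho.pos, ?_⟩
          obtain ⟨j, rfl⟩ : ∃ j, y = 2 * j := ⟨y / 2, by omega⟩
          rw [show 2 * j / 2 = j by omega]; ring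
        have := mt (sg_parity c h2).1 hsq
        omega
      · rw [p3, hc] at hyc
        have hsg := sg_three c hc
        rw [Q_zero 1 1 _ (by norm_num) (by norm_num) (by omega)]
        rcases y with _ | y
        · rw [Q33_zero _ (by simpa using h3)]; simp; omega
        · rw [pow_succ, mul_comm (3 ^ y) 3, mul_assoc 3 (3 ^ y) c, Q33_mul]
          have q := Q11 (3 ^ y * c) (by rw [pow_succ] at hyc; rw [mul_comm (3 ^ y) 3, mul_assoc] at hyc; omega)
          rw [sg_mul3 y c h3, mul_mod4 (sg (3 ^ y)) (sg c) 0 (by rw [sg_pow3, if_neg (by omega)])] at q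
          rw [pow_succ, mul_comm (3 ^ y) 3] at hW
          omega
    · rw [if_neg (by omega)] at p3
      have hW := mul_mod4 _ (sg c) _ p3
      rcases hc4 with hc | hc
      · rw [p3, hc] at hyc
        rw [Q_zero 1 1 _ (by norm_num) (by norm_num) (by omega)]
        rcases y with _ | y
        · omega
        · rw [pow_succ, mul_comm (3 ^ y) 3, mul_assoc 3 (3 ^ y) c, Q33_mul]
          have q := Q11 (3 ^ y * c) (by rw [pow_succ] at hyc; rw [mul_comm (3 ^ y) 3, mul_assoc] at hyc; omega)
          rw [sg_mul3 y c h3, mul_mod4 (sg (3 ^ y)) (sg c) 1 (by rw [sg_pow3, if_pos (by omega)])] at q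
          rw [pow_succ, mul_comm (3 ^ y) 3] at hW
          omega
      · rw [p3, hc] at hyc
        have hsg := sg_three c hc
        rw [Q_zero 3 3 _ (by norm_num) (by norm_num) (by omega)]
        have q := Q11 (3 ^ y * c) (by omega)
        rw [sg_mul3 y c h3, mul_mod4 (sg (3 ^ y)) (sg c) 0 (by rw [sg_pow3, if_neg (by omega)])] at q
        omega
  · simp only [zero_add, pow_one] at *
    rw [mul_assoc 2 (3 ^ y) c]
    have hodd : (3 ^ y * c) % 2 = 1 := by rw [Nat.mul_mod, h2, pow3_odd]
    rw [Q_zero 1 1 _ (by norm_num) (by norm_num) (by omega),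
      Q_zero 3 3 _ (by norm_num) (by norm_num) (by omega)]
    have q := Q13 (3 ^ y * c)
    rw [show 4 * (3 ^ y * c) = 2 * (2 * (3 ^ y * c)) by ring] at q
    have hs := sg_parity c h2
    have hw : (3 ^ y * sg c) % 2 = sg c % 2 := by
      rw [Nat.mul_mod, pow3_odd, one_mul, Nat.mod_mod]
    rw [show 3 * (2 * 3 ^ y) * sg c = 6 * (3 ^ y * sg c) by ring]
    rw [← isS_iff y c h2 h3] at hs
    split_ifs at q with hq
    · have := hs.2 hq; omega
    · have := mt hs.1 hq; omega
  · have e1 : 2 ^ (e + 1 + 1) * 3 ^ y * c = 4 * (2 ^ e * 3 ^ y * c) := by ring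
    have e2 : 3 * (2 ^ (e + 1 + 1) * 3 ^ y) * sg c = 4 * (3 * 2 ^ e * 3 ^ y * sg c) := by ring
    rw [e1, e2, Q_zero 1 1 _ (by norm_num) (by norm_num) (by omega),
      Q_zero 1 3 _ (by norm_num) (by norm_num) (by omega),
      Q_zero 3 3 _ (by norm_num) (by norm_num) (by omega)]
    omega
end RB

theorem Rbar_four_three_even_mod_eight (n : ℕ) (hn : 1 ≤ n)
    (h : ¬ ∃ m : ℕ, Odd m ∧ 0 < m ∧ n = m ^ 2) :
    Rbar 4 3 (2 * n) ≡ 0 [MOD 8] := by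
  obtain ⟨H, h1⟩ := RB.Rbar_expand (2 * n) (by omega)
  obtain ⟨t, h2⟩ := RB.sum_dd (2 * n)
  have h3 := RB.M_W n hn h
  have h4 := RB.d_even n hn
  rw [h2, h4] at h1
  unfold Nat.ModEq
  push_cast at h1
  omega
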